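/- arXiv:2507.04743 — 2 statements merged into one kernel-verified Lean document; each statement's English description precedes it below -/
import Mathlib

section
/- For all natural numbers a and b, one has 𝟙_a ∧ 𝟙_b = C(a+b, a) · 𝟙_{a+b} in ⋀^{a+b} V* ⊗ ⋀^{a+b} V, where C(a+b, a) denotes the binomial coefficient. -/
/-!
For arbitrary `T ∈ ⋀^a V* ⊗ ⋀^a V` and `S ∈ ⋀^b V* ⊗ ⋀^b V`, the endomorphism attached to `T ∧ S`
sends `v₁ ∧ ⋯ ∧ v_{a+b}` to the sum over shuffles `σ` (classes of permutations modulo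
`𝔖_a × 𝔖_b`) of
`sign σ • T (v_{σ 1} ∧ ⋯ ∧ v_{σ a}) ∧ S (v_{σ (a+1)} ∧ ⋯ ∧ v_{σ (a+b)})`
(`dualTensorHom_wedge_apply`); both sides are linear in `T` and `S`, so it is enough to look at
decomposable tensors, where this is the definition of the wedge product of forms. When `T` and `S`
induce the identity, every summand is
`sign σ • v_{σ 1} ∧ ⋯ ∧ v_{σ (a+b)} = v₁ ∧ ⋯ ∧ v_{a+b}` (`sign_smul_wedge_ιMultiP`), and there are
`(a+b).choose a` shuffles (`card_modSumCongr`). Finite-dimensionality enters through the injectivity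
of `dualTensorHom`.
-/


open Module
open scoped TensorProduct

noncomputable section

namespace GPB

variable {V : Type*} [AddCommGroup V] [Module ℝ V]

/-- The product of a `p`-vector and a `q`-vector is a `(p+q)`-vector. -/
theorem wedge_mem {p q r : ℕ} (h : p + q = r) {x y : ExteriorAlgebra ℝ V}
    (hx : x ∈ ⋀[ℝ]^p V) (hy : y ∈ ⋀[ℝ]^q V) : x * y ∈ ⋀[ℝ]^r V := by
  subst h
  show x * y ∈ LinearMap.range (ExteriorAlgebra.ι ℝ : V →ₗ[ℝ] ExteriorAlgebra ℝ V) ^ (p + q)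
  rw [pow_add]
  exact Submodule.mul_mem_mul hx hy

/-- The wedge (exterior) product of multivectors, as a bilinear map
`⋀^p V × ⋀^q V → ⋀^r V` (where `p + q = r`). -/
def wedgeBil {p q r : ℕ} (h : p + q = r) :
    ⋀[ℝ]^p V →ₗ[ℝ] ⋀[ℝ]^q V →ₗ[ℝ] ⋀[ℝ]^r V :=
  LinearMap.mk₂ ℝ (fun u w => ⟨u.1 * w.1, wedge_mem h u.2 w.2⟩)
    (fun u u' w => Subtype.ext (by simp [add_mul]))
    (fun c u w => Subtype.ext (by simp [smul_mul_assoc]))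
    (fun u w w' => Subtype.ext (by simp [mul_add]))
    (fun c u w => Subtype.ext (by simp [mul_smul_comm]))

/-- Contraction of an `r`-form by a `p`-multivector (`p + q = r`):
`(ι_u α) w = α (u ∧ w)`.  Bilinear in `u` and `α`. -/
def contrBil {p q r : ℕ} (h : p + q = r) :
    ⋀[ℝ]^p V →ₗ[ℝ] Dual ℝ (⋀[ℝ]^r V) →ₗ[ℝ] Dual ℝ (⋀[ℝ]^q V) :=
  (LinearMap.llcomp ℝ (⋀[ℝ]^q V) (⋀[ℝ]^r V) ℝ).flip.comp (wedgeBil h)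

/-- A vector `X : V` as an element of `⋀^1 V`. -/
def ιOne (X : V) : ⋀[ℝ]^1 V :=
  ⟨ExteriorAlgebra.ι ℝ X, by simpa only [pow_one] using LinearMap.mem_range_self _ X⟩

/-- `ιMulti` with values in the `n`-th exterior power. -/
def ιMultiP (n : ℕ) : V [⋀^Fin n]→ₗ[ℝ] (⋀[ℝ]^n V) :=
  (ExteriorAlgebra.ιMulti ℝ n).codRestrict (⋀[ℝ]^n V)
    (fun v => ExteriorAlgebra.ιMulti_range ℝ n (Set.mem_range_self v))

/-- A linear functional on `⋀^n V`, seen as an alternating `n`-form on `V`. -/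
def toAlt {n : ℕ} : Dual ℝ (⋀[ℝ]^n V) →ₗ[ℝ] (V [⋀^Fin n]→ₗ[ℝ] ℝ) where
  toFun θ := θ.compAlternatingMap (ιMultiP n)
  map_add' _ _ := rfl
  map_smul' _ _ := rfl

/-- A linear map on `⋀^n V` built out of an alternating `n`-multilinear map. -/
def extendL {n : ℕ} {N : Type*} [AddCommGroup N] [Module ℝ N] :
    (V [⋀^Fin n]→ₗ[ℝ] N) →ₗ[ℝ] (⋀[ℝ]^n V →ₗ[ℝ] N) :=
  (LinearMap.lcomp ℝ N (Submodule.subtype (⋀[ℝ]^n V))).comp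
    (ExteriorAlgebra.liftAlternating.comp
      (LinearMap.single ℝ (fun i => V [⋀^Fin i]→ₗ[ℝ] N) n))

/-- The wedge product of exterior forms (functionals on exterior powers),
as a bilinear map. -/
def formWedgeBil {r m t : ℕ} (h : r + m = t) :
    Dual ℝ (⋀[ℝ]^r V) →ₗ[ℝ] Dual ℝ (⋀[ℝ]^m V) →ₗ[ℝ] Dual ℝ (⋀[ℝ]^t V) := by
  subst h
  exact TensorProduct.curry
    (extendL.comp
      (((AlternatingMap.domDomCongrₗ ℝ finSumFinEquiv).toLinearMap).comp
        ((LinearMap.compAlternatingMapₗ ℝ (TensorProduct.lid ℝ ℝ).toLinearMap).comp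
          (AlternatingMap.domCoprod'.comp (TensorProduct.map toAlt toAlt)))))

/-- Contraction of a `c`-form `γ` by a multivector-valued form
`T ∈ ⋀^r V* ⊗ ⋀^q V`:  on decomposables, `ι_{θ ⊗ v} γ = θ ∧ (ι_v γ)`.
Here `q + s = c` and `r + s = d`. -/
def iotaT {r q c d : ℕ} (s : ℕ) (h₁ : q + s = c) (h₂ : r + s = d) :
    (Dual ℝ (⋀[ℝ]^r V) ⊗[ℝ] ⋀[ℝ]^q V) →ₗ[ℝ]
      Dual ℝ (⋀[ℝ]^c V) →ₗ[ℝ] Dual ℝ (⋀[ℝ]^d V) := by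
  subst h₁; subst h₂
  exact TensorProduct.lift
    (((LinearMap.llcomp ℝ (Dual ℝ (⋀[ℝ]^(q+s) V)) (Dual ℝ (⋀[ℝ]^s V))
          (Dual ℝ (⋀[ℝ]^(r+s) V))).comp (formWedgeBil rfl)).compl₂ (contrBil rfl))

/-- The canonical map `⋀^k V* ⊗ ⋀^a V → Hom(⋀^a V*, ⋀^k V*)`,
`θ ⊗ u ↦ (α ↦ α (u) • θ)`. -/
def pairHom (k a : ℕ) :
    (Dual ℝ (⋀[ℝ]^k V) ⊗[ℝ] ⋀[ℝ]^a V) →ₗ[ℝ]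
      (Dual ℝ (⋀[ℝ]^a V) →ₗ[ℝ] Dual ℝ (⋀[ℝ]^k V)) :=
  (dualTensorHom ℝ (Dual ℝ (⋀[ℝ]^a V)) (Dual ℝ (⋀[ℝ]^k V))).comp
    ((TensorProduct.map (Dual.eval ℝ (⋀[ℝ]^a V)) LinearMap.id).comp
      (TensorProduct.comm ℝ (Dual ℝ (⋀[ℝ]^k V)) (⋀[ℝ]^a V)).toLinearMap)


theorem extendL_ιMultiP {n : ℕ} {N : Type*} [AddCommGroup N] [Module ℝ N]
    (f : V [⋀^Fin n]→ₗ[ℝ] N) (v : Fin n → V) : extendL f (ιMultiP n v) = f v := by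
  change ExteriorAlgebra.liftAlternating
    (LinearMap.single ℝ (fun i => V [⋀^Fin i]→ₗ[ℝ] N) n f) (ExteriorAlgebra.ιMulti ℝ n v) = f v
  simp

/-- The shuffle formula for the wedge of two forms. The shuffle classes are represented by
`Quotient.out`; the summand does not depend on the representative. -/
theorem formWedgeBil_ιMultiP {a b : ℕ} (θ : Dual ℝ (⋀[ℝ]^a V)) (η : Dual ℝ (⋀[ℝ]^b V))
    (v : Fin (a + b) → V) :
    formWedgeBil rfl θ η (ιMultiP (a + b) v) =
      ∑ σ : Equiv.Perm.ModSumCongr (Fin a) (Fin b),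
        (Equiv.Perm.sign σ.out : ℤ) •
          (θ (ιMultiP a fun i => v (finSumFinEquiv (σ.out (Sum.inl i)))) *
            η (ιMultiP b fun i => v (finSumFinEquiv (σ.out (Sum.inr i))))) := by
  change extendL _ (ιMultiP (a + b) v) = _
  rw [extendL_ιMultiP]
  change TensorProduct.lid ℝ ℝ (AlternatingMap.domCoprod (toAlt θ) (toAlt η)
    fun i => v (finSumFinEquiv i)) = _
  rw [AlternatingMap.domCoprod_apply, _root_.sum_apply, map_sum]
  refine Finset.sum_congr rfl fun σ _ => ?_
  conv_lhs => rw [← Quotient.out_eq' σ]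
  rw [AlternatingMap.domCoprod.summand_mk'']
  rw [_root_.smul_apply, Units.smul_def, map_zsmul, MultilinearMap.domDomCongr_apply,
    MultilinearMap.domCoprod_apply, TensorProduct.lid_tmul, smul_eq_mul]
  rfl

/-- The factorwise wedge product `T ∧ S` of multivector-valued forms, acting as an endomorphism. -/
theorem dualTensorHom_wedge_apply {a b : ℕ} (T : Dual ℝ (⋀[ℝ]^a V) ⊗[ℝ] ⋀[ℝ]^a V)
    (S : Dual ℝ (⋀[ℝ]^b V) ⊗[ℝ] ⋀[ℝ]^b V) (v : Fin (a + b) → V) :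
    dualTensorHom ℝ (⋀[ℝ]^(a + b) V) (⋀[ℝ]^(a + b) V)
      ((TensorProduct.map (TensorProduct.lift (formWedgeBil rfl))
        (TensorProduct.lift (wedgeBil rfl)))
        ((TensorProduct.tensorTensorTensorComm ℝ (Dual ℝ (⋀[ℝ]^a V)) (⋀[ℝ]^a V)
          (Dual ℝ (⋀[ℝ]^b V)) (⋀[ℝ]^b V)) (T ⊗ₜ[ℝ] S))) (ιMultiP (a + b) v) =
      ∑ σ : Equiv.Perm.ModSumCongr (Fin a) (Fin b),
        (Equiv.Perm.sign σ.out : ℤ) •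
          wedgeBil rfl
            (dualTensorHom ℝ _ _ T
              (ιMultiP a fun i => v (finSumFinEquiv (σ.out (Sum.inl i)))))
            (dualTensorHom ℝ _ _ S
              (ιMultiP b fun i => v (finSumFinEquiv (σ.out (Sum.inr i))))) := by
  induction T using TensorProduct.induction_on with
  | zero => simp
  | add T₁ T₂ h₁ h₂ =>
    simp only [TensorProduct.add_tmul, map_add, LinearMap.add_apply, h₁, h₂, smul_add,
      Finset.sum_add_distrib]
  | tmul θ u =>
    induction S using TensorProduct.induction_on with
    | zero => simp
    | add S₁ S₂ h₁ h₂ =>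
      simp only [TensorProduct.tmul_add, map_add, LinearMap.add_apply, h₁, h₂, smul_add,
        Finset.sum_add_distrib]
    | tmul η w =>
      simp only [TensorProduct.tensorTensorTensorComm_tmul, TensorProduct.map_tmul,
        TensorProduct.lift.tmul, dualTensorHom_apply, formWedgeBil_ιMultiP, Finset.sum_smul,
        map_smul, LinearMap.smul_apply, smul_assoc, mul_smul]
      refine Finset.sum_congr rfl fun σ _ => ?_
      rw [smul_comm (θ _)]

theorem sign_smul_wedge_ιMultiP {a b : ℕ} (σ : Equiv.Perm (Fin a ⊕ Fin b))
    (v : Fin (a + b) → V) :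
    (Equiv.Perm.sign σ : ℤ) •
      wedgeBil rfl (ιMultiP a fun i => v (finSumFinEquiv (σ (Sum.inl i))))
        (ιMultiP b fun i => v (finSumFinEquiv (σ (Sum.inr i)))) = ιMultiP (a + b) v := by
  have h : wedgeBil rfl (ιMultiP a fun i => v (finSumFinEquiv (σ (Sum.inl i))))
      (ιMultiP b fun i => v (finSumFinEquiv (σ (Sum.inr i)))) =
      ιMultiP (a + b) (v ∘ finSumFinEquiv.permCongr σ) := by
    refine Subtype.ext ?_
    change ExteriorAlgebra.ιMulti ℝ a _ * ExteriorAlgebra.ιMulti ℝ b _ =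
      ExteriorAlgebra.ιMulti ℝ (a + b) _
    rw [ExteriorAlgebra.ιMulti_mul_ιMulti]
    congr 1
    funext i
    refine Fin.addCases (fun i => ?_) (fun i => ?_) i <;> simp [Equiv.permCongr_apply]
  rw [h, AlternatingMap.map_perm, Equiv.Perm.sign_permCongr, ← Units.smul_def, smul_smul,
    Int.units_mul_self, one_smul]

/-- The number of `(a, b)`-shuffles. -/
theorem card_modSumCongr (a b : ℕ) :
    Fintype.card (Equiv.Perm.ModSumCongr (Fin a) (Fin b)) = (a + b).choose a := by
  classical
  have h := Subgroup.card_eq_card_quotient_mul_card_subgroup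
    (Equiv.Perm.sumCongrHom (Fin a) (Fin b)).range
  rw [Nat.card_eq_fintype_card, Nat.card_eq_fintype_card, Nat.card_eq_fintype_card,
    Equiv.Perm.sumCongrHom.card_range, Fintype.card_prod, Fintype.card_perm, Fintype.card_perm,
    Fintype.card_perm, Fintype.card_sum, Fintype.card_fin, Fintype.card_fin] at h
  have h' := Nat.add_choose_mul_factorial_mul_factorial a b
  rw [← h', mul_assoc] at h
  rw [Nat.choose_symm_add]
  exact (Nat.eq_of_mul_eq_mul_right
    (Nat.mul_pos a.factorial_pos b.factorial_pos) h).symm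

/-- `𝟙_a ∧ 𝟙_b = (a+b choose a) • 𝟙_{a+b}` in
`⋀^{a+b} V* ⊗ ⋀^{a+b} V`, the wedge of multivector-valued forms being taken
factorwise: `(θ ⊗ u) ∧ (η ⊗ v) = (θ ∧ η) ⊗ (u ∧ v)`. -/
theorem wedge_of_identity_elements
    [FiniteDimensional ℝ V] (a b : ℕ)
    (onea : Dual ℝ (⋀[ℝ]^a V) ⊗[ℝ] ⋀[ℝ]^a V)
    (honea : dualTensorHom ℝ (⋀[ℝ]^a V) (⋀[ℝ]^a V) onea = LinearMap.id)
    (oneb : Dual ℝ (⋀[ℝ]^b V) ⊗[ℝ] ⋀[ℝ]^b V)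
    (honeb : dualTensorHom ℝ (⋀[ℝ]^b V) (⋀[ℝ]^b V) oneb = LinearMap.id)
    (oneab : Dual ℝ (⋀[ℝ]^(a + b) V) ⊗[ℝ] ⋀[ℝ]^(a + b) V)
    (honeab : dualTensorHom ℝ (⋀[ℝ]^(a + b) V) (⋀[ℝ]^(a + b) V) oneab = LinearMap.id) :
    (TensorProduct.map (TensorProduct.lift (formWedgeBil rfl))
        (TensorProduct.lift (wedgeBil rfl)))
      ((TensorProduct.tensorTensorTensorComm ℝ (Dual ℝ (⋀[ℝ]^a V)) (⋀[ℝ]^a V)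
          (Dual ℝ (⋀[ℝ]^b V)) (⋀[ℝ]^b V)) (onea ⊗ₜ[ℝ] oneb))
      = (((a + b).choose a : ℕ) : ℝ) • oneab := by
  apply (dualTensorHomEquiv ℝ (⋀[ℝ]^(a + b) V) (⋀[ℝ]^(a + b) V)).injective
  change dualTensorHom ℝ _ _ _ = dualTensorHom ℝ _ _ _
  rw [map_smul, honeab]
  apply exteriorPower.linearMap_ext
  ext1 v
  change dualTensorHom ℝ _ _ _ (ιMultiP (a + b) v) =
    (((a + b).choose a : ℕ) : ℝ) • ιMultiP (a + b) v
  rw [dualTensorHom_wedge_apply, honea, honeb]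
  simp only [LinearMap.id_apply, sign_smul_wedge_ιMultiP, Finset.sum_const, Finset.card_univ,
    card_modSumCongr, Nat.cast_smul_eq_nsmul]

end GPB
end
end

section
/- Let u ∈ ⋀^q V, let r ≥ 0, and let γ ∈ ⋀^c V* with c ≥ q + r. Then ι_{u ∧ 𝟙_r} γ = C(c − q, r) · ι_u γ, where C(c − q, r) denotes the binomial coefficient. (In particular, for u = ♯_b(β) ∈ ⋀^{n+1−b} V, r = b − a and γ ∈ ⋀^c V* with c ≥ n+1−a, this yields ι_{♯_b(β) ∧ 𝟙_{b−a}} γ = C(b + c − (n+1), b − a) · ι_{♯_b(β)} γ, the key identity of the paper's extension of the maps ♯_a to forms of higher degree.) -/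
/-!
Both sides are functionals on `⋀^(r+s) V`, so it suffices to compare them on decomposables
`w = w₁ ∧ ⋯ ∧ w_(r+s)`.  If `𝟙_r = ∑ θ ⊗ e`, the left-hand side is the signed sum over `(r, s)`-shuffles
`σ` of `∑ θ(w_σ') γ(u ∧ e ∧ w_σ'')`, where `w_σ'` and `w_σ''` are the wedges of the first `r` and the
last `s` vectors of the shuffled family.  Since `∑ θ(x) e = x`, this is the signed sum of
`γ(u ∧ w_σ' ∧ w_σ'')`, and every term equals `γ(u ∧ w)`; there are `(r+s choose r)` of them.

The count is done with all `(r+s)!` permutations rather than with shuffles, after multiplying by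
`r! s!` (`formWedgeBil_apply_ιMultiP`).  The dependence on `𝟙_r` through the endomorphism it
represents is `iotaT_wedge_apply_ιMultiP`, and the sign of the reordering is
`wedge_wedge_ιMultiP`.
-/

open Module
open scoped TensorProduct

noncomputable section

namespace GPB

variable {V : Type*} [AddCommGroup V] [Module ℝ V]

/-- On decomposables, the wedge of two forms is, up to the factor `r! m!`, the full antisymmetrisation
of their tensor product.  Summing over all permutations instead of over shuffles costs this factor
and avoids quotients of the permutation group. -/
theorem formWedgeBil_apply_ιMultiP {r m : ℕ} (θ : Dual ℝ (⋀[ℝ]^r V)) (β : Dual ℝ (⋀[ℝ]^m V))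
    (w : Fin (r + m) → V) :
    ((r.factorial * m.factorial : ℕ) : ℝ) * formWedgeBil rfl θ β (ιMultiP (r + m) w) =
      ∑ σ : Equiv.Perm (Fin r ⊕ Fin m), Equiv.Perm.sign σ •
        (θ (ιMultiP r fun i => w (finSumFinEquiv (σ (Sum.inl i)))) *
          β (ιMultiP m fun i => w (finSumFinEquiv (σ (Sum.inr i))))) := by
  have h1 : formWedgeBil rfl θ β (ιMultiP (r + m) w) =
      TensorProduct.lid ℝ ℝ
        ((toAlt θ).domCoprod (toAlt β) fun i => w (finSumFinEquiv i)) := by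
    refine (ExteriorAlgebra.liftAlternating_apply_ιMulti _ w).trans ?_
    simp only [LinearMap.single_apply, Pi.single_eq_same]
    rfl
  have h2 := congrArg (fun f => TensorProduct.lid ℝ ℝ (f fun i => w (finSumFinEquiv i)))
    (MultilinearMap.domCoprod_alternization_eq (toAlt θ) (toAlt β))
  simp only [MultilinearMap.alternatization_apply, Fintype.card_fin, AlternatingMap.smul_apply,
    map_sum, map_nsmul] at h2
  rw [h1, ← nsmul_eq_mul, ← h2]
  refine Finset.sum_congr rfl fun σ _ => ?_
  rw [Units.smul_def, Units.smul_def, map_zsmul]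
  rfl

/-- For `T ∈ ⋀^r V* ⊗ ⋀^r V`, the contraction by `u ∧ T` only involves `T` through the
endomorphism of `⋀^r V` which it represents. -/
theorem iotaT_wedge_apply_ιMultiP (q r s : ℕ) (u : ⋀[ℝ]^q V)
    (T : Dual ℝ (⋀[ℝ]^r V) ⊗[ℝ] ⋀[ℝ]^r V) (γ : Dual ℝ (⋀[ℝ]^(q + r + s) V))
    (w : Fin (r + s) → V) :
    ((r.factorial * s.factorial : ℕ) : ℝ) *
        iotaT s rfl rfl (LinearMap.lTensor (Dual ℝ (⋀[ℝ]^r V)) (wedgeBil rfl u) T) γ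
          (ιMultiP (r + s) w) =
      ∑ σ : Equiv.Perm (Fin r ⊕ Fin s), Equiv.Perm.sign σ •
        γ (wedgeBil rfl
          (wedgeBil rfl u (dualTensorHom ℝ (⋀[ℝ]^r V) (⋀[ℝ]^r V) T
            (ιMultiP r fun i => w (finSumFinEquiv (σ (Sum.inl i))))))
          (ιMultiP s fun i => w (finSumFinEquiv (σ (Sum.inr i))))) := by
  induction T using TensorProduct.induction_on with
  | zero => simp
  | add T T' hT hT' =>
    simp only [map_add, LinearMap.add_apply, mul_add, smul_add, Finset.sum_add_distrib, hT, hT']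
  | tmul θ v =>
    refine (formWedgeBil_apply_ιMultiP θ (contrBil rfl (wedgeBil rfl u v) γ) w).trans ?_
    refine Finset.sum_congr rfl fun σ _ => ?_
    simp only [dualTensorHom_apply, map_smul, LinearMap.smul_apply, smul_eq_mul]
    rfl

/-- Reassembling a permuted decomposable `(r+s)`-vector from its two parts, behind `u`. -/
theorem wedge_wedge_ιMultiP (q r s : ℕ) (u : ⋀[ℝ]^q V) (w : Fin (r + s) → V)
    (σ : Equiv.Perm (Fin r ⊕ Fin s)) (h : q + (r + s) = q + r + s) :
    wedgeBil (show q + r + s = q + r + s from rfl)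
        (wedgeBil rfl u (ιMultiP r fun i => w (finSumFinEquiv (σ (Sum.inl i)))))
        (ιMultiP s fun i => w (finSumFinEquiv (σ (Sum.inr i)))) =
      Equiv.Perm.sign σ •
        wedgeBil h u (ιMultiP (r + s) w) := by
  have hperm := (ExteriorAlgebra.ιMulti ℝ (M := V) (r + s)).map_perm w
    (finSumFinEquiv.permCongr σ)
  rw [Equiv.Perm.sign_permCongr] at hperm
  have happ : Fin.append (fun i => w (finSumFinEquiv (σ (Sum.inl i))))
      (fun i => w (finSumFinEquiv (σ (Sum.inr i)))) = w ∘ finSumFinEquiv.permCongr σ := by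
    funext i
    refine Fin.addCases (fun i => ?_) (fun i => ?_) i <;> simp [Equiv.permCongr_apply]
  apply Subtype.ext
  change (u.1 * ExteriorAlgebra.ιMulti ℝ r _) * ExteriorAlgebra.ιMulti ℝ s _ = _
  rw [mul_assoc, ExteriorAlgebra.ιMulti_mul_ιMulti, happ, hperm, Units.smul_def, Units.smul_def,
    mul_smul_comm]
  rfl

/-- For `u ∈ ⋀^q V`, `r ≥ 0` and `γ ∈ ⋀^c V*` with
`c = q + r + s ≥ q + r`:  `ι_{u ∧ 𝟙_r} γ = (c - q choose r) • ι_u γ`. -/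
theorem contraction_by_wedge_with_identity
    [FiniteDimensional ℝ V] (q r s : ℕ) (u : ⋀[ℝ]^q V)
    (oner : Dual ℝ (⋀[ℝ]^r V) ⊗[ℝ] ⋀[ℝ]^r V)
    (honer : dualTensorHom ℝ (⋀[ℝ]^r V) (⋀[ℝ]^r V) oner = LinearMap.id)
    (γ : Dual ℝ (⋀[ℝ]^(q + r + s) V)) :
    iotaT s rfl rfl (LinearMap.lTensor (Dual ℝ (⋀[ℝ]^r V)) (wedgeBil rfl u) oner) γ
      = (((r + s).choose r : ℕ) : ℝ) •
          contrBil (show q + (r + s) = q + r + s by omega) u γ := by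
  refine exteriorPower.linearMap_ext (AlternatingMap.ext fun w => ?_)
  change iotaT s rfl rfl (LinearMap.lTensor (Dual ℝ (⋀[ℝ]^r V)) (wedgeBil rfl u) oner) γ
      (ιMultiP (r + s) w) = (((r + s).choose r : ℕ) : ℝ) *
        γ (wedgeBil (show q + (r + s) = q + r + s by omega) u (ιMultiP (r + s) w))
  have hne : ((r.factorial * s.factorial : ℕ) : ℝ) ≠ 0 :=
    Nat.cast_ne_zero.mpr (mul_ne_zero r.factorial_ne_zero s.factorial_ne_zero)
  apply mul_left_cancel₀ hne
  rw [iotaT_wedge_apply_ιMultiP, honer]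
  -- The sign of the shuffle and the sign of the reordering cancel, so all `(r+s)!` terms agree.
  have hterm : ∀ σ : Equiv.Perm (Fin r ⊕ Fin s), Equiv.Perm.sign σ •
      γ (wedgeBil rfl
        (wedgeBil rfl u (LinearMap.id (R := ℝ)
          (ιMultiP r fun i => w (finSumFinEquiv (σ (Sum.inl i))))))
        (ιMultiP s fun i => w (finSumFinEquiv (σ (Sum.inr i))))) =
      γ (wedgeBil (show q + (r + s) = q + r + s by omega) u (ιMultiP (r + s) w)) := by
    intro σ
    rw [LinearMap.id_apply, wedge_wedge_ιMultiP, Units.smul_def, Units.smul_def, map_zsmul,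
      ← mul_smul, ← Units.val_mul, Int.units_mul_self, Units.val_one, one_smul]
  rw [Finset.sum_congr rfl fun σ _ => hterm σ, Finset.sum_const, Finset.card_univ,
    Fintype.card_perm, Fintype.card_sum, Fintype.card_fin, Fintype.card_fin, nsmul_eq_mul,
    ← mul_assoc, ← Nat.cast_mul]
  congr 2
  rw [← Nat.add_choose_mul_factorial_mul_factorial r s, Nat.choose_symm_add]
  ring

end GPB
end
end
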